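/- Let H be a k-Hopf algebra with antipode S, flat as a k-module. Write ∫ for the set of left integrals on H*, i.e. k-linear maps φ : H → k with Σ h_(1)·φ(h_(2)) = φ(h)·1_H for all h∈H, and V_3 for the set of k-linear maps θ : H⊗H → k with Σ c_(1) ⊗ θ(c_(2)⊗d) = Σ d_(2) ⊗ θ(c⊗d_(1)) for all c,d∈H. Then: (i) for every φ∈∫, the map i(φ) : h⊗g ↦ φ(h·S(g)) lies in V_3; (ii) for every θ∈V_3, the map p(θ) : h ↦ θ(h⊗1_H) lies in ∫; (iii) p∘i = id_∫; (iv) an element θ∈V_3 lies in the image of i if and only if Σ θ(h·l_(1) ⊗ g·l_(2)) = θ(h⊗g)·ε(l) for all h,g,l∈H. -/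

import Mathlib

/-!
Everything reduces to identities in the convolution ring `Hom(H, H ⊗ H)`. With
`ι₁ h = h ⊗ 1` and `ι₂ h = 1 ⊗ h`, one has `Δ = ι₁ * ι₂`, and since `ι₁`, `ι₂` are algebra maps,
`ιⱼ ∘ S` is a two-sided convolution inverse of `ιⱼ`. As `Δ ∘ S` is a convolution inverse of `Δ`,
it equals `(ι₂ ∘ S) * (ι₁ ∘ S)` (the antipode reverses the comultiplication).

* Part (i). Put `Φ (a ⊗ b) = φ(b) a`, so that `Φ (Δ x) = φ(x) 1` for an integral `φ`, and
  `Φ (t) y = Φ (t (y ⊗ 1))`. Then `Σ φ(c S(d₁)) d₂ = Φ (Δ c · ((Δ ∘ S) * ι₁)(d))`, and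
  `(Δ ∘ S) * ι₁ = ι₂ ∘ S` gives `Φ (Δ c · (1 ⊗ S d)) = Σ c₁ φ(c₂ S(d))`.
* Parts (ii) and (iii) follow by evaluating at `1`.
* Part (iv). If `θ = i(φ)`, then `Σ l₁ S(l₂) = ε(l)` and `S(g l) = S(l) S(g)` give the invariance.
  Conversely, an invariant `θ` satisfies `θ(h S(g) ⊗ 1) = θ((h ⊗ 1) · ((ι₁ ∘ S) * Δ)(g))`,
  and `(ι₁ ∘ S) * Δ = ι₂`, so `θ = i(p(θ))`.
-/


open TensorProduct

noncomputable section

section Integrals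

variable {k H : Type*} [CommRing k] [Ring H] [HopfAlgebra k H]

/-- `φ : H → k` is a left integral on `H*`: `Σ h_(1)·φ(h_(2)) = φ(h)·1_H`. -/
def IsLeftIntegralOn (φ : H →ₗ[k] k) : Prop :=
  ∀ h : H, (TensorProduct.rid k H)
      ((TensorProduct.map LinearMap.id φ) (Coalgebra.comul (R := k) h))
    = φ h • (1 : H)

/-- `θ : H ⊗ H → k` lies in `V₃` (for the Doi-Hopf datum `(k,k,H)`):
`Σ c_(1) ⊗ θ(c_(2) ⊗ d) = Σ d_(2) ⊗ θ(c ⊗ d_(1))`. -/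
def IsV3k (θ : H ⊗[k] H →ₗ[k] k) : Prop :=
  (TensorProduct.rid k H).toLinearMap ∘ₗ (TensorProduct.map LinearMap.id θ) ∘ₗ
      (TensorProduct.assoc k H H H).toLinearMap ∘ₗ
      (TensorProduct.map (Coalgebra.comul (R := k)) LinearMap.id)
    = (TensorProduct.rid k H).toLinearMap ∘ₗ (TensorProduct.map LinearMap.id θ) ∘ₗ
      (TensorProduct.comm k (H ⊗[k] H) H).toLinearMap ∘ₗ
      (TensorProduct.assoc k H H H).symm.toLinearMap ∘ₗ
      (TensorProduct.map LinearMap.id (Coalgebra.comul (R := k)))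

/-- The map `i : ∫ → V₃`, `i(φ)(h ⊗ g) = φ(h·S(g))`. -/
def intToV3 (φ : H →ₗ[k] k) : H ⊗[k] H →ₗ[k] k :=
  φ ∘ₗ (LinearMap.mul' k H) ∘ₗ
    (TensorProduct.map LinearMap.id (HopfAlgebra.antipode (R := k)))

/-- The map `p : V₃ → ∫`, `p(θ)(h) = θ(h ⊗ 1)`. -/
def v3ToInt (θ : H ⊗[k] H →ₗ[k] k) : H →ₗ[k] k :=
  θ ∘ₗ ((TensorProduct.mk k H H).flip 1)

end Integrals

section ConvolutionIdentities

open WithConv Coalgebra HopfAlgebra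

variable {k H : Type*} [CommRing k] [Ring H] [HopfAlgebra k H]

/-- The algebra map `ι₁ : h ↦ h ⊗ 1`. -/
abbrev inclL (k H : Type*) [CommRing k] [Ring H] [HopfAlgebra k H] : H →ₐ[k] H ⊗[k] H :=
  Algebra.TensorProduct.includeLeft

/-- The algebra map `ι₂ : h ↦ 1 ⊗ h`. -/
abbrev inclR (k H : Type*) [CommRing k] [Ring H] [HopfAlgebra k H] : H →ₐ[k] H ⊗[k] H :=
  Algebra.TensorProduct.includeRight

/-- Composing `S` with an algebra map gives a left convolution inverse of that map. -/
lemma conv_antipode_comp_mul {A : Type*} [Ring A] [Algebra k A] (f : H →ₐ[k] A) :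
    toConv (f.toLinearMap ∘ₗ antipode k) * toConv f.toLinearMap = 1 := by
  have h := LinearMap.algHom_comp_convMul_distrib f (toConv (antipode k (A := H)))
    (toConv LinearMap.id)
  rw [LinearMap.antipode_mul_id] at h
  apply WithConv.ofConv_injective
  refine h.symm.trans ?_
  ext x
  simp [LinearMap.convOne_def]

lemma conv_comul_eq :
    toConv (comul (R := k) (A := H)) =
      toConv (inclL k H).toLinearMap * toConv (inclR k H).toLinearMap := by
  ext x
  rw [(ℛ k x).convMul_apply]
  simp [← (ℛ k x).eq]

/-- The antipode reverses the comultiplication: `Δ(S x) = Σ S(x₂) ⊗ S(x₁)`, written as a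
convolution product. -/
lemma conv_comul_antipode :
    toConv (comul (R := k) (A := H) ∘ₗ antipode k) =
      toConv ((inclR k H).toLinearMap ∘ₗ antipode k) *
        toConv ((inclL k H).toLinearMap ∘ₗ antipode k) := by
  refine (left_inv_eq_right_inv ?_ (LinearMap.comul_right_inv (R := k) (C := H))).symm
  rw [conv_comul_eq, mul_assoc, ← mul_assoc (toConv ((inclL k H).toLinearMap ∘ₗ antipode k)),
    conv_antipode_comp_mul, one_mul, conv_antipode_comp_mul]

/-- `Σ Δ(S(d₁)) (d₂ ⊗ 1) = 1 ⊗ S(d)`. -/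
lemma sum_comul_antipode_mul {ι : Type*} {d : H} (r : Coalgebra.Repr k d ι) :
    ∑ j ∈ r.index, comul (R := k) (antipode k (r.left j)) * (r.right j ⊗ₜ[k] (1 : H)) =
      1 ⊗ₜ[k] antipode k d := by
  have h : toConv (comul (R := k) (A := H) ∘ₗ antipode k) * toConv (inclL k H).toLinearMap =
      toConv ((inclR k H).toLinearMap ∘ₗ antipode k) := by
    rw [conv_comul_antipode, mul_assoc, conv_antipode_comp_mul, mul_one]
  have h' := congr($h d)
  rw [r.convMul_apply] at h'
  simpa using h'

/-- `Σ (S(g₁) ⊗ 1) Δ(g₂) = 1 ⊗ g`. -/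
lemma sum_antipode_mul_comul {ι : Type*} {g : H} (r : Coalgebra.Repr k g ι) :
    ∑ j ∈ r.index, (antipode k (r.left j) ⊗ₜ[k] (1 : H)) * comul (R := k) (r.right j) =
      1 ⊗ₜ[k] g := by
  have h : toConv ((inclL k H).toLinearMap ∘ₗ antipode k) * toConv (comul (R := k) (A := H)) =
      toConv (inclR k H).toLinearMap := by
    rw [conv_comul_eq, ← mul_assoc, conv_antipode_comp_mul, one_mul]
  have h' := congr($h g)
  rw [r.convMul_apply] at h'
  simpa using h'

/-- The map `Φ : a ⊗ b ↦ φ(b) a`. -/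
def evalR (φ : H →ₗ[k] k) : H ⊗[k] H →ₗ[k] H :=
  (TensorProduct.rid k H).toLinearMap ∘ₗ TensorProduct.map LinearMap.id φ

@[simp] lemma evalR_tmul (φ : H →ₗ[k] k) (a b : H) : evalR φ (a ⊗ₜ b) = φ b • a := by
  simp [evalR]

lemma evalR_mul (φ : H →ₗ[k] k) (t : H ⊗[k] H) (y : H) :
    evalR φ t * y = evalR φ (t * (y ⊗ₜ 1)) := by
  induction t with
  | zero => simp
  | tmul a b => simp
  | add a b ha hb => simp [add_mul, ha, hb]

@[simp] lemma intToV3_tmul (φ : H →ₗ[k] k) (h g : H) :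
    intToV3 φ (h ⊗ₜ g) = φ (h * antipode k g) := by
  simp [intToV3]

@[simp] lemma v3ToInt_apply (θ : H ⊗[k] H →ₗ[k] k) (h : H) :
    v3ToInt θ h = θ (h ⊗ₜ 1) := by
  simp [v3ToInt]

/-- Membership in `V₃` may be checked in Sweedler form, on one expansion of each `Δ c`, `Δ d`. -/
lemma isV3k_of_sum_eq {θ : H ⊗[k] H →ₗ[k] k}
    (hθ : ∀ c d : H,
      ∑ i ∈ (ℛ k c).index, θ ((ℛ k c).right i ⊗ₜ d) • (ℛ k c).left i =
      ∑ j ∈ (ℛ k d).index, θ (c ⊗ₜ (ℛ k d).left j) • (ℛ k d).right j) :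
    IsV3k θ := by
  refine TensorProduct.ext' fun c d => ?_
  simp only [LinearMap.comp_apply, TensorProduct.map_tmul, ← (ℛ k c).eq, ← (ℛ k d).eq]
  simpa [TensorProduct.sum_tmul, TensorProduct.tmul_sum] using hθ c d

lemma intToV3_isV3k {φ : H →ₗ[k] k} (hφ : IsLeftIntegralOn φ) : IsV3k (intToV3 φ) := by
  have hΦ : ∀ x : H, evalR φ (comul x) = φ x • (1 : H) := hφ
  refine isV3k_of_sum_eq fun c d => ?_
  have key : ∑ j ∈ (ℛ k d).index,
      intToV3 φ (c ⊗ₜ (ℛ k d).left j) • (ℛ k d).right j =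
      evalR φ (comul c * (1 ⊗ₜ antipode k d)) := by
    rw [← sum_comul_antipode_mul (ℛ k d), Finset.mul_sum, map_sum]
    refine Finset.sum_congr rfl fun j _ => ?_
    rw [← mul_assoc, ← evalR_mul, ← Bialgebra.comul_mul, hΦ]
    simp
  rw [key, ← (ℛ k c).eq, Finset.sum_mul, map_sum]
  simp

lemma v3ToInt_isLeftIntegralOn {θ : H ⊗[k] H →ₗ[k] k} (hθ : IsV3k θ) :
    IsLeftIntegralOn (v3ToInt θ) := by
  intro h
  have h1 := congr($hθ (h ⊗ₜ[k] (1 : H)))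
  simp only [LinearMap.comp_apply, TensorProduct.map_tmul, ← (ℛ k h).eq,
    Bialgebra.comul_one] at h1
  rw [← (ℛ k h).eq]
  simpa [TensorProduct.sum_tmul, Algebra.TensorProduct.one_def] using h1

lemma map_mul_tensorComm (s t : H ⊗[k] H) :
    TensorProduct.map (LinearMap.mul' k H) (LinearMap.mul' k H)
      (TensorProduct.tensorTensorTensorComm k H H H H (s ⊗ₜ[k] t)) = s * t := by
  induction s with
  | zero => simp
  | add a b ha hb => simp [TensorProduct.add_tmul, ha, hb, add_mul]
  | tmul a b =>
    induction t with
    | zero => simp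
    | add a b ha hb => simp [TensorProduct.tmul_add, ha, hb, mul_add]
    | tmul c d => simp

/-- The functional `i(φ)` is invariant under the diagonal right action of `H`. -/
lemma intToV3_mul_comul (φ : H →ₗ[k] k) (h g l : H) :
    intToV3 φ ((h ⊗ₜ g) * comul l) = counit (R := k) l * intToV3 φ (h ⊗ₜ g) := by
  have key : ∑ i ∈ (ℛ k l).index,
      h * (ℛ k l).left i * antipode k (g * (ℛ k l).right i) =
      counit (R := k) l • (h * antipode k g) := by
    calc _ = h * (∑ i ∈ (ℛ k l).index, (ℛ k l).left i * antipode k ((ℛ k l).right i)) *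
          antipode k g := by
          rw [Finset.mul_sum, Finset.sum_mul]
          refine Finset.sum_congr rfl fun i _ => ?_
          rw [antipode_mul_antidistrib]
          simp only [mul_assoc]
      _ = _ := by rw [sum_mul_antipode_eq_smul]; simp
  rw [← (ℛ k l).eq, Finset.mul_sum, map_sum]
  simp only [Algebra.TensorProduct.tmul_mul_tmul, intToV3_tmul]
  rw [← map_sum, key, map_smul, smul_eq_mul]

/-- A functional invariant under the diagonal right action of `H` is determined by its values
on `H ⊗ 1`. -/
lemma intToV3_v3ToInt_of_invariant {θ : H ⊗[k] H →ₗ[k] k}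
    (hθ : ∀ h g l : H, θ ((h ⊗ₜ g) * comul l) = counit (R := k) l * θ (h ⊗ₜ g)) :
    intToV3 (v3ToInt θ) = θ := by
  refine TensorProduct.ext' fun h g => ?_
  have hg : ∑ j ∈ (ℛ k g).index, counit (R := k) ((ℛ k g).right j) • (ℛ k g).left j = g := by
    simpa only [map_sum, TensorProduct.rid_tmul, one_smul] using
      congr(TensorProduct.rid k H $(sum_tmul_counit_eq (ℛ k g)))
  calc intToV3 (v3ToInt θ) (h ⊗ₜ g)
      = ∑ j ∈ (ℛ k g).index, θ ((h * antipode k ((ℛ k g).left j)) ⊗ₜ 1 *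
          comul ((ℛ k g).right j)) := by
        conv_lhs => rw [← hg]
        simp [hθ, TensorProduct.tmul_sum]
    _ = θ ((h ⊗ₜ 1) * (1 ⊗ₜ g)) := by
        rw [← sum_antipode_mul_comul (ℛ k g), Finset.mul_sum, map_sum]
        simp [← mul_assoc]
    _ = θ (h ⊗ₜ g) := by simp

end ConvolutionIdentities

/-- let `H` be a `k`-flat Hopf algebra. Then (i) for every left integral
`φ` on `H*`, the map `i(φ) : h ⊗ g ↦ φ(h·S(g))` lies in `V₃`; (ii) for every `θ ∈ V₃`,
`p(θ) : h ↦ θ(h ⊗ 1)` is a left integral; (iii) `p ∘ i = id` on integrals; (iv) `θ ∈ V₃`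
lies in the image of `i` iff `Σ θ(h·l_(1) ⊗ g·l_(2)) = θ(h ⊗ g)·ε(l)` for all `h,g,l`. -/
theorem classical_integrals_and_V3
    {k H : Type*} [CommRing k] [Ring H] [HopfAlgebra k H] [Module.Flat k H] :
    (∀ φ : H →ₗ[k] k, IsLeftIntegralOn φ → IsV3k (intToV3 φ)) ∧
    (∀ θ : H ⊗[k] H →ₗ[k] k, IsV3k θ → IsLeftIntegralOn (v3ToInt θ)) ∧
    (∀ φ : H →ₗ[k] k, IsLeftIntegralOn φ → v3ToInt (intToV3 φ) = φ) ∧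
    (∀ θ : H ⊗[k] H →ₗ[k] k, IsV3k θ →
      ((∃ φ : H →ₗ[k] k, IsLeftIntegralOn φ ∧ intToV3 φ = θ) ↔
        ∀ h g l : H,
          θ ((TensorProduct.map (LinearMap.mul' k H) (LinearMap.mul' k H))
              ((TensorProduct.tensorTensorTensorComm k H H H H)
                ((h ⊗ₜ[k] g) ⊗ₜ[k] Coalgebra.comul (R := k) l)))
            = Coalgebra.counit (R := k) l * θ (h ⊗ₜ[k] g))) := by
  refine ⟨fun φ hφ => intToV3_isV3k hφ, fun θ hθ => v3ToInt_isLeftIntegralOn hθ,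
    fun φ _ => by ext h; simp, fun θ hθ => ?_⟩
  simp only [map_mul_tensorComm]
  constructor
  · rintro ⟨φ, -, rfl⟩ h g l
    exact intToV3_mul_comul φ h g l
  · intro hinv
    exact ⟨v3ToInt θ, v3ToInt_isLeftIntegralOn hθ, intToV3_v3ToInt_of_invariant hinv⟩
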